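/- arXiv:2108.06642 — 3 statements merged into one kernel-verified Lean document; each statement's English description precedes it below -/
import Mathlib

section
/- Let X and W be subcategories of A such that X is closed under extensions and W is a cogenerator for X. Then for every object C of A and every integer n ≥ 1, the following are equivalent: (1) C ∈ X̂_n; (2) there exists a short exact sequence 0 → Y_C → X_C → C → 0 in A with X_C ∈ X and Y_C ∈ Ŵ_{n−1}. -/
/-!
The implication from approximations to `X̂ₙ` is immediate from `W ⊆ X`. For the converse, take
`0 → K → E → M → 0` with `E ∈ X` and `K ∈ X̂ₙ`. It suffices to embed `K` into some `Q ∈ Ŵₙ` with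
cokernel `X' ∈ X`: the pushout `P` of `E` and `Q` over `K` then sits in `0 → Q → P → M → 0` and
`0 → E → P → X' → 0`, so `P ∈ X` by closure under extensions (`exists_approx`).

For `n = 0` the embedding is given by the cogenerator. For `n ≥ 1`, by induction there is
`0 → Y → A → K → 0` with `A ∈ X` and `Y ∈ Ŵₙ₋₁`; embedding `A` into `W₀ ∈ W` with cokernel
`X' ∈ X`, the object `Q = W₀ / Y`, the pushout of `W₀` and `K` over `A`, does the job.
-/

open CategoryTheory CategoryTheory.Limits CategoryTheory.Abelian ZeroObject

universe w v u

namespace FrobeniusPaper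

variable {C : Type u} [Category.{v} C] [Abelian C]

/-- `f, g` form a short exact sequence `0 → A → B → D → 0` in the abelian category `C`. -/
def IsSES {A B D : C} (f : A ⟶ B) (g : B ⟶ D) : Prop :=
  ∃ w : f ≫ g = 0, (ShortComplex.mk f g w).ShortExact

/-- A "subcategory" in the sense of the paper: a full additive subcategory, regarded as the
predicate of membership for its objects, closed under isomorphisms and direct summands. -/
structure IsSubcat (X : C → Prop) : Prop where
  zero : X 0
  iso_closed : ∀ {A B : C}, (A ≅ B) → X A → X B
  biprod_closed : ∀ {A B : C}, X A → X B → X (A ⊞ B)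
  summand_closed : ∀ {A M : C} (i : A ⟶ M) (p : M ⟶ A), i ≫ p = 𝟙 A → X M → X A

/-- `Hat X n M` means `M ∈ X̂ₙ`, i.e. there is an exact sequence
`0 → Xₙ → ⋯ → X₁ → X₀ → M → 0` with all `Xᵢ ∈ X`. -/
def Hat (X : C → Prop) : ℕ → C → Prop
  | 0, M => X M
  | (n + 1), M => ∃ (K E : C) (f : K ⟶ E) (g : E ⟶ M), IsSES f g ∧ X E ∧ Hat X n K

/-- `M ∈ X̂ = ⋃ₙ X̂ₙ`. -/
def HatAll (X : C → Prop) (M : C) : Prop := ∃ n, Hat X n M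

/-- `W` is a cogenerator for `X`. -/
def IsCogenerator (W X : C → Prop) : Prop :=
  (∀ M, W M → X M) ∧
    ∀ M, X M → ∃ (W₀ X' : C) (f : M ⟶ W₀) (g : W₀ ⟶ X'), IsSES f g ∧ W W₀ ∧ X X'

/-- `W` is a generator for `X`. -/
def IsGenerator (W X : C → Prop) : Prop :=
  (∀ M, W M → X M) ∧
    ∀ M, X M → ∃ (X' W₀ : C) (f : X' ⟶ W₀) (g : W₀ ⟶ M), IsSES f g ∧ W W₀ ∧ X X'

/-- `X` is closed under extensions. -/
def ExtClosed (X : C → Prop) : Prop :=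
  ∀ ⦃A B D : C⦄ (f : A ⟶ B) (g : B ⟶ D), IsSES f g → X A → X D → X B

/-- `X` is closed under kernels of epimorphisms. -/
def KerEpiClosed (X : C → Prop) : Prop :=
  ∀ ⦃A B D : C⦄ (f : A ⟶ B) (g : B ⟶ D), IsSES f g → X B → X D → X A

/-- A thick subcategory: closed under direct summands and two-out-of-three for
short exact sequences. -/
def IsThickSub (T : C → Prop) : Prop :=
  IsSubcat T ∧ ∀ ⦃A B D : C⦄ (f : A ⟶ B) (g : B ⟶ D), IsSES f g →
    (T A → T B → T D) ∧ (T A → T D → T B) ∧ (T B → T D → T A)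

/-- Membership in `Thick(X)`, the smallest thick subcategory containing `X`. -/
def thickClosure (X : C → Prop) (M : C) : Prop :=
  ∀ T : C → Prop, IsThickSub T → (∀ N, X N → T N) → T M

variable [HasExt.{w} C]

/-- `Y ∈ X^⊥`, i.e. `Extⁱ(M, Y) = 0` for all `i ≥ 1` and `M ∈ X`. -/
def rightPerp (X : C → Prop) (Y : C) : Prop :=
  ∀ M, X M → ∀ i : ℕ, 1 ≤ i → Subsingleton (Abelian.Ext M Y i)

/-- A left Frobenius pair `(X, W)`. -/
structure LeftFrobenius (X W : C → Prop) : Prop where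
  subX : IsSubcat X
  subW : IsSubcat W
  extClosed : ExtClosed X
  kerEpiClosed : KerEpiClosed X
  cogen : IsCogenerator W X
  perp : ∀ M, W M → rightPerp X M

/-- A strong left Frobenius pair `(X, W)`. -/
structure StrongLeftFrobenius (X W : C → Prop) extends LeftFrobenius X W : Prop where
  gen : IsGenerator W X
  proj : ∀ M N, W M → X N → ∀ i : ℕ, 1 ≤ i → Subsingleton (Abelian.Ext M N i)

/-- A cotorsion pair `(U, V)` on an extension-closed subcategory `B` of `C`. -/
structure CotorsionPairOn (B U V : C → Prop) : Prop where
  subU : ∀ M, U M → B M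
  subV : ∀ M, V M → B M
  isoU : ∀ {A B' : C}, (A ≅ B') → U A → U B'
  summandU : ∀ {A M : C} (i : A ⟶ M) (p : M ⟶ A), i ≫ p = 𝟙 A → U M → U A
  isoV : ∀ {A B' : C}, (A ≅ B') → V A → V B'
  summandV : ∀ {A M : C} (i : A ⟶ M) (p : M ⟶ A), i ≫ p = 𝟙 A → V M → V A
  ext1 : ∀ M N, U M → V N → Subsingleton (Abelian.Ext M N 1)
  res : ∀ M, B M → ∃ (V₀ U₀ : C) (f : V₀ ⟶ U₀) (g : U₀ ⟶ M), IsSES f g ∧ U U₀ ∧ V V₀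
  cores : ∀ M, B M → ∃ (V₀ U₀ : C) (f : M ⟶ V₀) (g : V₀ ⟶ U₀), IsSES f g ∧ U U₀ ∧ V V₀

/-- The cobase change of a short exact sequence `0 → A → B → D → 0` along `a : A ⟶ A'` is a short
exact sequence `0 → A' → P → D → 0`, with `P` the pushout. -/
lemma isSES_pushout {C : Type u} [Category.{v} C] [Abelian C] {A B D A' : C}
    {f : A ⟶ B} {g : B ⟶ D} (h : IsSES f g) (a : A ⟶ A') :
    ∃ g' : pushout f a ⟶ D, IsSES (pushout.inr f a) g' := by
  obtain ⟨w, hS⟩ := h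
  have hf : Mono f := hS.mono_f
  have hg : Epi g := hS.epi_g
  have hl : pushout.inl f a ≫ pushout.desc g (0 : A' ⟶ D) (by simp [w]) = g := pushout.inl_desc ..
  have hr : pushout.inr f a ≫ pushout.desc g (0 : A' ⟶ D) (by simp [w]) = 0 := pushout.inr_desc ..
  have hepi : Epi (pushout.desc g (0 : A' ⟶ D) (by simp [w]) : pushout f a ⟶ D) :=
    epi_of_epi_fac hl
  refine ⟨_, hr, ShortComplex.ShortExact.mk' (ShortComplex.exact_of_g_is_cokernel _ ?_)
    (inferInstanceAs (Mono (pushout.inr f a))) hepi⟩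
  refine CokernelCofork.IsColimit.ofπ' _ _ fun {T} k hk => ?_
  -- A map out of `P` killing `A'` restricts to a map out of `B` killing `A`.
  have hk' : f ≫ pushout.inl f a ≫ k = 0 := by
    rw [pushout.condition_assoc]; exact (congrArg (a ≫ ·) hk).trans comp_zero
  refine ⟨hS.exact.desc (pushout.inl f a ≫ k) hk', ?_⟩
  apply pushout.hom_ext
  · rw [reassoc_of% hl]
    exact hS.exact.g_desc _ _
  · rw [reassoc_of% hr, zero_comp]
    exact hk.symm

/-- If `p` is a cokernel of the monomorphism `y : Y ⟶ A`, then for a monomorphism `i : A ⟶ B` the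
pushout of `p` along `i` is a cokernel of `y ≫ i`. -/
lemma isSES_comp_pushout {C : Type u} [Category.{v} C] [Abelian C] {Y A K B : C}
    {y : Y ⟶ A} {p : A ⟶ K} (h : IsSES y p) (i : A ⟶ B) [Mono i] :
    IsSES (y ≫ i) (pushout.inl i p) := by
  obtain ⟨w, hS⟩ := h
  have hy : Mono y := hS.mono_f
  have hp : Epi p := hS.epi_g
  have hw : (y ≫ i) ≫ pushout.inl i p = 0 := by
    rw [Category.assoc, pushout.condition, reassoc_of% w, zero_comp]
  refine ⟨hw, ShortComplex.ShortExact.mk' (ShortComplex.exact_of_g_is_cokernel _ ?_)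
    (inferInstanceAs (Mono (y ≫ i))) (inferInstanceAs (Epi (pushout.inl i p)))⟩
  refine CokernelCofork.IsColimit.ofπ' _ _ fun {T} k hk => ?_
  have hk' : y ≫ i ≫ k = 0 := by rw [← Category.assoc]; exact hk
  exact ⟨pushout.desc k (hS.exact.desc (i ≫ k) hk') (hS.exact.g_desc _ hk').symm,
    pushout.inl_desc ..⟩

lemma IsSES.pushout_inl {C : Type u} [Category.{v} C] [Abelian C] {A B D A' : C}
    {f : A ⟶ B} {g : B ⟶ D} (h : IsSES f g) (a : A ⟶ A') :
    ∃ g' : pushout a f ⟶ D, IsSES (pushout.inl a f) g' := by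
  obtain ⟨g', w, hS⟩ := isSES_pushout h a
  have e : pushout.inl a f ≫ (pushoutSymmetry a f).hom = pushout.inr f a := by simp
  have w' : pushout.inl a f ≫ (pushoutSymmetry a f).hom ≫ g' = 0 := by rw [reassoc_of% e, w]
  have φ : ShortComplex.mk _ _ w ≅ ShortComplex.mk _ _ w' :=
    ShortComplex.isoMk (Iso.refl _) (pushoutSymmetry a f).symm (Iso.refl _) (by simp) (by simp)
  exact ⟨_, w', ShortComplex.shortExact_of_iso φ hS⟩

lemma Hat.mono {C : Type u} [Category.{v} C] [Abelian C] {W X : C → Prop}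
    (h : ∀ M, W M → X M) : ∀ (n : ℕ) (M : C), Hat W n M → Hat X n M
  | 0, M, hM => h M hM
  | n + 1, _, ⟨K, E, f, g, hfg, hE, hK⟩ => ⟨K, E, f, g, hfg, h E hE, Hat.mono h n K hK⟩

/-- If `K` embeds into `Q ∈ Ŵₙ` with cokernel in `X`, then any quotient `M = E / K` with `E ∈ X` has
an `X`-approximation with kernel `Q`, namely the pushout of `E` and `Q` over `K`. -/
lemma exists_approx {C : Type u} [Category.{v} C] [Abelian C] {X W : C → Prop}
    (hXext : ExtClosed X) {n : ℕ} {K E M Q X' : C} {f : K ⟶ E} {g : E ⟶ M} (h : IsSES f g)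
    (hE : X E) {j : K ⟶ Q} {q : Q ⟶ X'} (h' : IsSES j q) (hQ : Hat W n Q) (hX' : X X') :
    ∃ (Y E : C) (f : Y ⟶ E) (g : E ⟶ M), IsSES f g ∧ X E ∧ Hat W n Y := by
  obtain ⟨g', hg'⟩ := isSES_pushout h j
  obtain ⟨q', hq'⟩ := h'.pushout_inl f
  exact ⟨Q, pushout f j, _, g', hg', hXext _ _ hq' hE hX', hQ⟩

lemma exists_approx_of_hat {C : Type u} [Category.{v} C] [Abelian C] {X W : C → Prop}
    (hXext : ExtClosed X) (hcog : IsCogenerator W X) (n : ℕ) (M : C) (hM : Hat X (n + 1) M) :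
    ∃ (Y E : C) (f : Y ⟶ E) (g : E ⟶ M), IsSES f g ∧ X E ∧ Hat W n Y := by
  induction n generalizing M with
  | zero =>
    obtain ⟨K, E, f, g, h, hE, hK⟩ := hM
    obtain ⟨W₀, X', i, q, h', hW₀, hX'⟩ := hcog.2 K hK
    exact exists_approx hXext h hE h' hW₀ hX'
  | succ n ih =>
    obtain ⟨K, E, f, g, h, hE, hK⟩ := hM
    obtain ⟨Y, A, y, p, hyp, hA, hY⟩ := ih K hK
    obtain ⟨W₀, X', i, q, h', hW₀, hX'⟩ := hcog.2 A hA
    have hi : Mono i := h'.2.mono_f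
    -- `Q = W₀ / Y` contains `K = A / Y`, with the same cokernel `X'` as `A` in `W₀`.
    obtain ⟨q', hq'⟩ := isSES_pushout h' p
    exact exists_approx hXext h hE hq' ⟨Y, W₀, _, _, isSES_comp_pushout hyp i, hW₀, hY⟩ hX'

/-- If `X` is closed under extensions and `W` is a cogenerator for `X`,
then for `n ≥ 1`, `C ∈ X̂ₙ` iff there is a short exact sequence `0 → Y_C → X_C → C → 0`
with `X_C ∈ X` and `Y_C ∈ Ŵₙ₋₁`. -/
theorem statement0 {C : Type u} [Category.{v} C] [Abelian C]
    [EnoughProjectives C] [EnoughInjectives C]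
    (X W : C → Prop) (hX : IsSubcat X) (hW : IsSubcat W)
    (hXext : ExtClosed X) (hcog : IsCogenerator W X)
    (M : C) (n : ℕ) (hn : 1 ≤ n) :
    Hat X n M ↔
      ∃ (Y E : C) (f : Y ⟶ E) (g : E ⟶ M), IsSES f g ∧ X E ∧ Hat W (n - 1) Y := by
  obtain ⟨m, rfl⟩ : ∃ m, n = m + 1 := ⟨n - 1, by omega⟩
  refine ⟨exists_approx_of_hat hXext hcog m M, ?_⟩
  rintro ⟨Y, E, f, g, h, hE, hY⟩
  exact ⟨Y, E, f, g, h, hE, Hat.mono hcog.1 m Y hY⟩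

end FrobeniusPaper
end

section
/- Let X and W be subcategories of A such that X is closed under extensions and W is a cogenerator for X. If C ∈ X̂_n (n ≥ 0), then there exists a short exact sequence 0 → C → Y^C → X^C → 0 in A with X^C ∈ X and Y^C ∈ Ŵ_n. Conversely, if in addition X is closed under kernels of epimorphisms (i.e., whenever 0 → A' → B → C' → 0 is exact with B, C' ∈ X, then A' ∈ X), then the existence of such a short exact sequence 0 → C → Y^C → X^C → 0 with X^C ∈ X and Y^C ∈ Ŵ_n implies C ∈ X̂_n. -/
/-!
Forward direction, by induction on `n`; the case `n = 0` is the cogenerator property. Given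
`0 → K → E → M → 0` with `E ∈ X` and `K ∈ X̂ₙ`, embed `K` into some `Y ∈ Ŵₙ` with cokernel
`X' ∈ X`, and let `P` be the pushout of `E ← K → Y`. It sits in `0 → E → P → X' → 0` and
`0 → Y → P → M → 0` (`IsSES.pushout`), so `P ∈ X` by closure under extensions, and `P` embeds
into some `W₀ ∈ W` with cokernel `X'' ∈ X`. Then `W₀ / Y` lies in `Ŵₙ₊₁`, and by the third
isomorphism theorem (`IsSES.exists_quotient`) it contains `P / Y ≅ M` with quotient `X''`.

Conversely, let `0 → M → Y → E → 0` with `E ∈ X`. If `Y ∈ W`, then `M` is the kernel of an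
epimorphism in `X`. If `0 → K → W₀ → Y → 0` with `W₀ ∈ W` and `K ∈ Ŵₙ`, then the kernel `P` of
`W₀ → Y → E` lies in `X`, and `0 → K → P → M → 0` is exact (`IsSES.exists_kernel`); since
`W ⊆ X`, this gives `M ∈ X̂ₙ₊₁`.
-/

open CategoryTheory CategoryTheory.Limits CategoryTheory.Abelian ZeroObject

universe w v u

namespace FrobeniusPaper

variable {C : Type u} [Category.{v} C] [Abelian C]

variable [HasExt.{w} C]

/-- A monomorphism together with a cokernel of it is a short exact sequence. -/
lemma IsSES.of_mono_of_desc {C : Type u} [Category.{v} C] [Abelian C] {A B D : C}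
    (f : A ⟶ B) (g : B ⟶ D) [Mono f] [Epi g] (w : f ≫ g = 0)
    (h : ∀ {Z : C} (k : B ⟶ Z), f ≫ k = 0 → ∃ l : D ⟶ Z, g ≫ l = k) : IsSES f g := by
  refine ⟨w, ShortComplex.ShortExact.mk' ?_ ‹_› ‹_›⟩
  exact ShortComplex.exact_of_g_is_cokernel _
    (CokernelCofork.IsColimit.ofπ g w (fun k hk => (h k hk).choose)
      (fun k hk => (h k hk).choose_spec)
      (fun k hk m hm => by rw [← cancel_epi g, hm, (h k hk).choose_spec]))

/-- An epimorphism together with a kernel of it is a short exact sequence. -/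
lemma IsSES.of_epi_of_lift {C : Type u} [Category.{v} C] [Abelian C] {A B D : C}
    (f : A ⟶ B) (g : B ⟶ D) [Mono f] [Epi g] (w : f ≫ g = 0)
    (h : ∀ {Z : C} (k : Z ⟶ B), k ≫ g = 0 → ∃ l : Z ⟶ A, l ≫ f = k) : IsSES f g := by
  refine ⟨w, ShortComplex.ShortExact.mk' ?_ ‹_› ‹_›⟩
  exact ShortComplex.exact_of_f_is_kernel _
    (KernelFork.IsLimit.ofι f w (fun k hk => (h k hk).choose)
      (fun k hk => (h k hk).choose_spec)
      (fun k hk m hm => by rw [← cancel_mono f, hm, (h k hk).choose_spec]))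

lemma IsSES.mono {C : Type u} [Category.{v} C] [Abelian C] {A B D : C}
    {f : A ⟶ B} {g : B ⟶ D} (h : IsSES f g) : Mono f := h.2.mono_f

lemma IsSES.epi {C : Type u} [Category.{v} C] [Abelian C] {A B D : C}
    {f : A ⟶ B} {g : B ⟶ D} (h : IsSES f g) : Epi g := h.2.epi_g

lemma IsSES.exists_desc {C : Type u} [Category.{v} C] [Abelian C] {A B D Z : C}
    {f : A ⟶ B} {g : B ⟶ D} (h : IsSES f g) (k : B ⟶ Z) (hk : f ≫ k = 0) :
    ∃ l : D ⟶ Z, g ≫ l = k := by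
  obtain ⟨w, hs⟩ := h
  have := hs.epi_g
  exact ⟨hs.exact.desc k hk, hs.exact.g_desc k hk⟩

lemma IsSES.exists_lift {C : Type u} [Category.{v} C] [Abelian C] {A B D Z : C}
    {f : A ⟶ B} {g : B ⟶ D} (h : IsSES f g) (k : Z ⟶ B) (hk : k ≫ g = 0) :
    ∃ l : Z ⟶ A, l ≫ f = k := by
  obtain ⟨w, hs⟩ := h
  have := hs.mono_f
  exact ⟨hs.exact.lift k hk, hs.exact.lift_f k hk⟩

/-- Pushing out `0 → A → B → D → 0` along `a : A ⟶ A'` yields a short exact sequence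
`0 → A' → P → D → 0`. -/
lemma IsSES.pushout {C : Type u} [Category.{v} C] [Abelian C] {A B D A' P : C}
    {f : A ⟶ B} {g : B ⟶ D} (h : IsSES f g) {a : A ⟶ A'} {b : B ⟶ P} {f' : A' ⟶ P}
    (sq : IsPushout f a b f') : ∃ g' : P ⟶ D, IsSES f' g' := by
  have := h.mono
  have := h.epi
  have : Mono f' := (MorphismProperty.monomorphisms C).of_isPushout sq.flip h.mono
  have hw : f ≫ g = a ≫ 0 := by rw [comp_zero]; exact h.1
  have : Epi (sq.desc g 0 hw) := epi_of_epi_fac (sq.inl_desc g 0 hw)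
  refine ⟨sq.desc g 0 hw, IsSES.of_mono_of_desc _ _ (sq.inr_desc _ _ _) fun k hk => ?_⟩
  obtain ⟨l, hl⟩ := h.exists_desc (b ≫ k) (by rw [sq.w_assoc, hk, comp_zero])
  exact ⟨l, sq.hom_ext (by rw [sq.inl_desc_assoc, hl])
    (by rw [sq.inr_desc_assoc, hk, zero_comp])⟩

/-- The third isomorphism theorem: for `A ⊆ B ⊆ E` there is an exact sequence
`0 → B/A → E/A → E/B → 0`. -/
lemma IsSES.exists_quotient {C : Type u} [Category.{v} C] [Abelian C] {A B Q E D : C}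
    {f : A ⟶ B} {p : B ⟶ Q} (h : IsSES f p) {i : B ⟶ E} {g : E ⟶ D} (h' : IsSES i g) :
    ∃ (R : C) (q : E ⟶ R) (j : Q ⟶ R) (r : R ⟶ D), IsSES (f ≫ i) q ∧ IsSES j r := by
  -- `E/A` is realised as the pushout of `E ← B → B/A`.
  have sq := IsPushout.of_hasPushout i p
  have := h.mono
  have := h'.mono
  have : Epi (pushout.inl i p) :=
    (MorphismProperty.epimorphisms C).of_isPushout sq h.epi
  obtain ⟨r, hr⟩ := h'.pushout sq
  refine ⟨_, pushout.inl i p, _, r, IsSES.of_mono_of_desc _ _ ?_ fun k hk => ?_, hr⟩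
  · rw [Category.assoc, sq.w, ← Category.assoc, h.1, zero_comp]
  · obtain ⟨l, hl⟩ := h.exists_desc (i ≫ k) (by rw [← Category.assoc, hk])
    exact ⟨sq.desc k l hl.symm, sq.inl_desc _ _ _⟩

/-- For epimorphisms `E ⟶ Y ⟶ D` the kernel `P` of the composite is an extension of the
kernel `M` of `Y ⟶ D` by the kernel `K` of `E ⟶ Y`. -/
lemma IsSES.exists_kernel {C : Type u} [Category.{v} C] [Abelian C] {K E Y M D : C}
    {i : K ⟶ E} {p : E ⟶ Y} (h : IsSES i p) {f : M ⟶ Y} {g : Y ⟶ D} (h' : IsSES f g) :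
    ∃ (P : C) (q : P ⟶ E) (j : K ⟶ P) (r : P ⟶ M), IsSES q (p ≫ g) ∧ IsSES j r := by
  -- `P` is realised as the pullback of `M → Y ← E`.
  have sq := IsPullback.of_hasPullback p f
  have := h.mono
  have := h.epi
  have := h'.epi
  have : Mono (pullback.fst p f) :=
    (MorphismProperty.monomorphisms C).of_isPullback sq.flip h'.mono
  have : Epi (pullback.snd p f) := inferInstance
  have hw : i ≫ p = 0 ≫ f := by rw [zero_comp]; exact h.1
  have : Mono (sq.lift i 0 hw) := mono_of_mono_fac (sq.lift_fst i 0 hw)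
  refine ⟨_, pullback.fst p f, sq.lift i 0 hw, pullback.snd p f,
    IsSES.of_epi_of_lift _ _ ?_ fun k hk => ?_,
    IsSES.of_epi_of_lift _ _ (sq.lift_snd _ _ _) fun k hk => ?_⟩
  · rw [sq.w_assoc, h'.1, comp_zero]
  · obtain ⟨l, hl⟩ := h'.exists_lift (k ≫ p) (by rw [Category.assoc, hk])
    exact ⟨sq.lift k l hl.symm, sq.lift_fst _ _ _⟩
  · obtain ⟨l, hl⟩ := h.exists_lift (k ≫ pullback.fst p f)
      (by rw [Category.assoc, sq.w, reassoc_of% hk, zero_comp])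
    exact ⟨l, sq.hom_ext (by rw [Category.assoc, sq.lift_fst, hl])
      (by rw [Category.assoc, sq.lift_snd, hk, comp_zero])⟩

lemma Hat.of_le {C : Type u} [Category.{v} C] [Abelian C] {W X : C → Prop}
    (hWX : ∀ M, W M → X M) : ∀ (n : ℕ) (M : C), Hat W n M → Hat X n M
  | 0, M, h => hWX M h
  | n + 1, _, ⟨K, E, f, g, hs, hE, hK⟩ =>
    ⟨K, E, f, g, hs, hWX E hE, Hat.of_le hWX n K hK⟩

/-- Every object of `X̂ₙ` embeds into an object of `Ŵₙ` with cokernel in `X`. -/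
lemma Hat.exists_embedding {C : Type u} [Category.{v} C] [Abelian C] {X W : C → Prop}
    (hXext : ExtClosed X) (hcog : IsCogenerator W X) (n : ℕ) (M : C) (hM : Hat X n M) :
    ∃ (Y E : C) (f : M ⟶ Y) (g : Y ⟶ E), IsSES f g ∧ X E ∧ Hat W n Y := by
  induction n generalizing M with
  | zero =>
    obtain ⟨W₀, X', f, g, hs, hW₀, hX'⟩ := hcog.2 M hM
    exact ⟨W₀, X', f, g, hs, hX', hW₀⟩
  | succ n ih =>
    obtain ⟨K, E, f, g, hs, hE, hK⟩ := hM
    obtain ⟨Y, X', a, b, hs', hX', hY⟩ := ih K hK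
    have sq := IsPushout.of_hasPushout f a
    obtain ⟨r, hr⟩ := hs.pushout sq
    obtain ⟨r', hr'⟩ := hs'.pushout sq.flip
    -- The pushout is an extension of `X'` by `E`, hence embeds into an object of `W`.
    obtain ⟨W₀, X'', i, p, hip, hW₀, hX''⟩ := hcog.2 _ (hXext _ _ hr' hE hX')
    obtain ⟨Q, q, j, t, hq, hj⟩ := hr.exists_quotient hip
    exact ⟨Q, X'', j, t, hj, hX'', Y, W₀, _, q, hq, hW₀, hY⟩

/-- If `X` is closed under extensions and `W` is a cogenerator for `X`, then
`C ∈ X̂ₙ` implies the existence of a short exact sequence `0 → C → Y^C → X^C → 0` with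
`X^C ∈ X`, `Y^C ∈ Ŵₙ`; conversely, if in addition `X` is closed under kernels of
epimorphisms, the existence of such a sequence implies `C ∈ X̂ₙ`. -/
theorem statement1 {C : Type u} [Category.{v} C] [Abelian C]
    [EnoughProjectives C] [EnoughInjectives C]
    (X W : C → Prop) (hX : IsSubcat X) (hW : IsSubcat W)
    (hXext : ExtClosed X) (hcog : IsCogenerator W X)
    (M : C) (n : ℕ) :
    (Hat X n M →
      ∃ (Y E : C) (f : M ⟶ Y) (g : Y ⟶ E), IsSES f g ∧ X E ∧ Hat W n Y) ∧
    (KerEpiClosed X →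
      (∃ (Y E : C) (f : M ⟶ Y) (g : Y ⟶ E), IsSES f g ∧ X E ∧ Hat W n Y) →
      Hat X n M) := by
  refine ⟨Hat.exists_embedding hXext hcog n M, ?_⟩
  rintro hker ⟨Y, E, f, g, hs, hE, hY⟩
  cases n with
  | zero => exact hker f g hs (hcog.1 Y hY) hE
  | succ n =>
    obtain ⟨K, W₀, i, p, hip, hW₀, hK⟩ := hY
    obtain ⟨P, q, j, r, hq, hj⟩ := hip.exists_kernel hs
    exact ⟨K, P, j, r, hj, hker q _ hq (hcog.1 W₀ hW₀) hE, Hat.of_le hcog.1 n K hK⟩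

end FrobeniusPaper
end

section
/- Let U and V be subcategories of A such that (U, V) is a cotorsion pair on the extension-closed subcategory Thick(U) of A and V ⊆ U^⊥. Then (U, U ∩ V) is a left Frobenius pair in A; in particular, U is closed under extensions and under kernels of epimorphisms, and U ∩ V is a cogenerator for U contained in U^⊥. -/
/-!
An object `M` of `Thick(U)` lies in `U` as soon as `Ext¹(M, V) = 0` for all `V ∈ V`: the sequence
`0 → V₀ → U₀ → M → 0` provided by the cotorsion pair then splits, so `M` is a summand of `U₀`
(`CotorsionPairOn.mem_left`). Dually, an object of `Thick(U)` right `Ext¹`-orthogonal to `U` lies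
in `V` (`CotorsionPairOn.mem_right`). Since `Thick(U)` satisfies two-out-of-three, all closure
properties reduce to long exact sequences of `Ext`. Closure of `U` under extensions is the exactness
of `Ext¹(D, V) → Ext¹(B, V) → Ext¹(A, V)`; closure under kernels of epimorphisms is the exactness of
`Ext¹(B, V) → Ext¹(A, V) → Ext²(D, V)`, where the last term vanishes because `V ⊆ U^⊥`. Finally,
for `M ∈ U` the sequence `0 → M → V₀ → U₀ → 0` has `V₀ ∈ U` by closure under extensions, so
`U ∩ V` is a cogenerator for `U`.
-/

open CategoryTheory CategoryTheory.Limits CategoryTheory.Abelian ZeroObject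

universe w v u

namespace FrobeniusPaper

variable {C : Type u} [Category.{v} C] [Abelian C]

variable [HasExt.{w} C]

section Auxiliary

variable {C : Type u} [Category.{v} C] [Abelian C]

lemma isThickSub_thickClosure (X : C → Prop) : IsThickSub (thickClosure X) where
  left :=
    { zero := fun _ hT _ => hT.1.zero
      iso_closed := fun e hA T hT hX => hT.1.iso_closed e (hA T hT hX)
      biprod_closed := fun hA hB T hT hX => hT.1.biprod_closed (hA T hT hX) (hB T hT hX)
      summand_closed := fun i p h hM T hT hX => hT.1.summand_closed i p h (hM T hT hX) }
  right := fun _ _ _ f g h =>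
    ⟨fun hA hB T hT hX => (hT.2 f g h).1 (hA T hT hX) (hB T hT hX),
      fun hA hD T hT hX => (hT.2 f g h).2.1 (hA T hT hX) (hD T hT hX),
      fun hB hD T hT hX => (hT.2 f g h).2.2 (hB T hT hX) (hD T hT hX)⟩

lemma isSES_biprod (A B : C) : IsSES (biprod.inl : A ⟶ A ⊞ B) (biprod.snd : A ⊞ B ⟶ B) :=
  ⟨by simp, (ShortComplex.Splitting.ofHasBinaryBiproduct A B).shortExact⟩

variable [HasExt.{w} C]

lemma IsSES.exists_section {A B D : C} {f : A ⟶ B} {g : B ⟶ D} (h : IsSES f g)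
    (hE : Subsingleton (Abelian.Ext D A 1)) : ∃ s : D ⟶ B, s ≫ g = 𝟙 D := by
  obtain ⟨w, hS⟩ := h
  obtain ⟨x, hx⟩ := Ext.covariant_sequence_exact₃ D hS (Ext.mk₀ (𝟙 D)) (zero_add 1)
    (hE.elim _ _)
  obtain ⟨s, rfl⟩ := (Ext.mk₀_bijective D B).2 x
  refine ⟨s, (Ext.mk₀_bijective D D).1 ?_⟩
  simpa using hx

lemma IsSES.exists_retraction {A B D : C} {f : A ⟶ B} {g : B ⟶ D} (h : IsSES f g)
    (hE : Subsingleton (Abelian.Ext D A 1)) : ∃ r : B ⟶ A, f ≫ r = 𝟙 A := by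
  obtain ⟨w, hS⟩ := h
  obtain ⟨x, hx⟩ := Ext.contravariant_sequence_exact₁ hS A (Ext.mk₀ (𝟙 A)) (add_zero 1)
    (hE.elim _ _)
  obtain ⟨r, rfl⟩ := (Ext.mk₀_bijective B A).2 x
  refine ⟨r, (Ext.mk₀_bijective A A).1 ?_⟩
  simpa using hx

lemma IsSES.ext_middle_left {A B D : C} {f : A ⟶ B} {g : B ⟶ D} (h : IsSES f g) (N : C) (n : ℕ)
    (hA : Subsingleton (Abelian.Ext A N n)) (hD : Subsingleton (Abelian.Ext D N n)) :
    Subsingleton (Abelian.Ext B N n) := by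
  obtain ⟨w, hS⟩ := h
  refine subsingleton_of_forall_eq 0 fun x => ?_
  obtain ⟨y, rfl⟩ := Ext.contravariant_sequence_exact₂ hS N x (hA.elim _ _)
  rw [hD.elim y 0]
  simp

lemma IsSES.ext_middle_right {A B D : C} {f : A ⟶ B} {g : B ⟶ D} (h : IsSES f g) (N : C) (n : ℕ)
    (hA : Subsingleton (Abelian.Ext N A n)) (hD : Subsingleton (Abelian.Ext N D n)) :
    Subsingleton (Abelian.Ext N B n) := by
  obtain ⟨w, hS⟩ := h
  refine subsingleton_of_forall_eq 0 fun x => ?_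
  obtain ⟨y, rfl⟩ := Ext.covariant_sequence_exact₂ N hS x (hD.elim _ _)
  rw [hA.elim y 0]
  simp

lemma IsSES.ext_kernel {A B D : C} {f : A ⟶ B} {g : B ⟶ D} (h : IsSES f g) (N : C) (n : ℕ)
    (hB : Subsingleton (Abelian.Ext B N n)) (hD : Subsingleton (Abelian.Ext D N (1 + n))) :
    Subsingleton (Abelian.Ext A N n) := by
  obtain ⟨w, hS⟩ := h
  refine subsingleton_of_forall_eq 0 fun x => ?_
  obtain ⟨y, rfl⟩ := Ext.contravariant_sequence_exact₁ hS N x rfl (hD.elim _ _)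
  rw [hB.elim y 0]
  simp

lemma ext_zero_left (N : C) (n : ℕ) : Subsingleton (Abelian.Ext (0 : C) N n) := by
  refine subsingleton_of_forall_eq 0 fun x => ?_
  rw [← Ext.mk₀_id_comp x, show 𝟙 (0 : C) = 0 from (isZero_zero C).eq_of_src _ _, Ext.mk₀_zero,
    Ext.zero_comp]

lemma ext_zero_right (N : C) (n : ℕ) : Subsingleton (Abelian.Ext N (0 : C) n) := by
  refine subsingleton_of_forall_eq 0 fun x => ?_
  rw [← Ext.comp_mk₀_id x, show 𝟙 (0 : C) = 0 from (isZero_zero C).eq_of_src _ _, Ext.mk₀_zero,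
    Ext.comp_zero]

/-- The sequence `0 → V₀ → U₀ → M → 0` splits, so `M` is a direct summand of `U₀`. -/
lemma CotorsionPairOn.mem_left {B U V : C → Prop} (h : CotorsionPairOn B U V) {M : C} (hM : B M)
    (hE : ∀ N, V N → Subsingleton (Abelian.Ext M N 1)) : U M := by
  obtain ⟨V₀, U₀, f, g, hs, hU, hV⟩ := h.res M hM
  obtain ⟨s, hsg⟩ := hs.exists_section (hE V₀ hV)
  exact h.summandU s g hsg hU

/-- The sequence `0 → M → V₀ → U₀ → 0` splits, so `M` is a direct summand of `V₀`. -/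
lemma CotorsionPairOn.mem_right {B U V : C → Prop} (h : CotorsionPairOn B U V) {M : C} (hM : B M)
    (hE : ∀ N, U N → Subsingleton (Abelian.Ext N M 1)) : V M := by
  obtain ⟨V₀, U₀, f, g, hs, hU, hV⟩ := h.cores M hM
  obtain ⟨r, hfr⟩ := hs.exists_retraction (hE U₀ hU)
  exact h.summandV f r hfr hV

end Auxiliary

/-- If `(U, V)` is a cotorsion pair on `Thick(U)` with `V ⊆ U^⊥`, then
`(U, U ∩ V)` is a left Frobenius pair. -/
theorem statement8 {C : Type u} [Category.{v} C] [Abelian C]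
    [EnoughProjectives C] [EnoughInjectives C] [HasExt.{w} C]
    (U V : C → Prop) (hcp : CotorsionPairOn (thickClosure U) U V)
    (hperp : ∀ N, V N → rightPerp U N) :
    LeftFrobenius U (fun M => U M ∧ V M) := by
  have hT := isThickSub_thickClosure U
  have hUext : ExtClosed U := fun A B D f g hs hA hD =>
    hcp.mem_left ((hT.2 f g hs).2.1 (hcp.subU A hA) (hcp.subU D hD)) fun N hN =>
      hs.ext_middle_left N 1 (hcp.ext1 A N hA hN) (hcp.ext1 D N hD hN)
  have hVext : ExtClosed V := fun A B D f g hs hA hD =>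
    hcp.mem_right ((hT.2 f g hs).2.1 (hcp.subV A hA) (hcp.subV D hD)) fun N hN =>
      hs.ext_middle_right N 1 (hcp.ext1 N A hN hA) (hcp.ext1 N D hN hD)
  have hU : IsSubcat U :=
    { zero := hcp.mem_left hT.1.zero fun N _ => ext_zero_left N 1
      iso_closed := hcp.isoU
      biprod_closed := fun hA hB => hUext _ _ (isSES_biprod _ _) hA hB
      summand_closed := hcp.summandU }
  have hV : IsSubcat V :=
    { zero := hcp.mem_right hT.1.zero fun N _ => ext_zero_right N 1
      iso_closed := hcp.isoV
      biprod_closed := fun hA hB => hVext _ _ (isSES_biprod _ _) hA hB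
      summand_closed := hcp.summandV }
  exact
    { subX := hU
      subW :=
        { zero := ⟨hU.zero, hV.zero⟩
          iso_closed := fun e h => ⟨hU.iso_closed e h.1, hV.iso_closed e h.2⟩
          biprod_closed := fun hA hB =>
            ⟨hU.biprod_closed hA.1 hB.1, hV.biprod_closed hA.2 hB.2⟩
          summand_closed := fun i p hip h =>
            ⟨hU.summand_closed i p hip h.1, hV.summand_closed i p hip h.2⟩ }
      extClosed := hUext
      kerEpiClosed := fun A B D f g hs hB hD =>
        hcp.mem_left ((hT.2 f g hs).2.2 (hcp.subU B hB) (hcp.subU D hD)) fun N hN =>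
          hs.ext_kernel N 1 (hcp.ext1 B N hB hN) (hperp N hN D hD (1 + 1) (by omega))
      cogen := by
        refine ⟨fun _ h => h.1, fun M hM => ?_⟩
        obtain ⟨V₀, U₀, f, g, hs, hU₀, hV₀⟩ := hcp.cores M (hcp.subU M hM)
        exact ⟨V₀, U₀, f, g, hs, ⟨hUext f g hs hM hU₀, hV₀⟩, hU₀⟩
      perp := fun M hM => hperp M hM.2 }

end FrobeniusPaper
end
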